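/- arXiv:2312.12311 — 2 statements merged into one kernel-verified Lean document; each statement's English description precedes it below -/
import Mathlib

section
/- Let P be the group with presentation ⟨g₁, g₂, g₃, g_{β₁}, g_{β₂}, g_{β₃} | g_i g_j = g_j g_i for i, j ∈ {1,2,3}, g_{β_i}² = g_i for i ∈ {1,2,3}, g_{β_i} g_j g_{β_i}⁻¹ = g_j⁻¹ for i ≠ j in {1,2,3}, g_{β₃} = g₁ g_{β₂} g_{β₁}⟩. Then the subgroup Λ of P generated by g₁, g₂, g₃ is a normal subgroup, Λ is free abelian of rank 3 with basis {g₁, g₂, g₃}, and the quotient P/Λ is isomorphic to ℤ/2 × ℤ/2, generated by the images of g_{β₁} and g_{β₂}. -/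
namespace FlatZ2Z2

/-- Generators: `0, 1, 2` are `g₁, g₂, g₃`, and `3, 4, 5` are `g_{β₁}, g_{β₂}, g_{β₃}`. -/
abbrev F (i : Fin 6) : FreeGroup (Fin 6) := FreeGroup.of i

/-- The embedding of the indices of `g₁, g₂, g₃` into the generator indices. -/
abbrev ι (i : Fin 3) : Fin 6 := i.castLE (by norm_num)

/-- Relations of `π₁(T³/(ℤ₂ × ℤ₂))` (the Hantzsche–Wendt manifold): the `gᵢ` commute,
`g_{βᵢ}² = gᵢ` for `i ∈ {1,2,3}`, `g_{βᵢ} g_j g_{βᵢ}⁻¹ = g_j⁻¹` for `i ≠ j`, and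
`g_{β₃} = g₁ g_{β₂} g_{β₁}`. -/
def rels : Set (FreeGroup (Fin 6)) :=
  {r | ∃ i j : Fin 3, r = F (ι i) * F (ι j) * (F (ι i))⁻¹ * (F (ι j))⁻¹} ∪
  {F 3 * F 3 * (F 0)⁻¹,
   F 4 * F 4 * (F 1)⁻¹,
   F 5 * F 5 * (F 2)⁻¹,
   F 3 * F 1 * (F 3)⁻¹ * F 1,
   F 3 * F 2 * (F 3)⁻¹ * F 2,
   F 4 * F 0 * (F 4)⁻¹ * F 0,
   F 4 * F 2 * (F 4)⁻¹ * F 2,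
   F 5 * F 0 * (F 5)⁻¹ * F 0,
   F 5 * F 1 * (F 5)⁻¹ * F 1,
   F 5 * (F 3)⁻¹ * (F 4)⁻¹ * (F 0)⁻¹}

/-- The fundamental group `P = π₁(T³/(ℤ₂ × ℤ₂))` given by the above presentation. -/
abbrev P := PresentedGroup rels

/-- The images of the generators in `P`. -/
def g (i : Fin 6) : P := PresentedGroup.of i

/-- The subgroup `Λ` generated by `g₁, g₂, g₃`. -/
def Λ : Subgroup P := Subgroup.closure {g 0, g 1, g 2}

theorem rel_eq {r : FreeGroup (Fin 6)} (h : r ∈ rels) : PresentedGroup.mk rels r = 1 :=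
  PresentedGroup.one_of_mem h

theorem g_comm (i j : Fin 3) : g (ι i) * g (ι j) = g (ι j) * g (ι i) := by
  have h := rel_eq (Or.inl ⟨i, j, rfl⟩)
  simp only [map_mul, map_inv] at h
  change g (ι i) * g (ι j) * (g (ι i))⁻¹ * (g (ι j))⁻¹ = 1 at h
  rwa [mul_inv_eq_one, mul_inv_eq_iff_eq_mul] at h

theorem c01 : g 0 * g 1 = g 1 * g 0 := g_comm 0 1
theorem c02 : g 0 * g 2 = g 2 * g 0 := g_comm 0 2
theorem c12 : g 1 * g 2 = g 2 * g 1 := g_comm 1 2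

theorem sq3 : g 3 * g 3 = g 0 := by
  have h := rel_eq (r := F 3 * F 3 * (F 0)⁻¹) (by right; simp)
  exact mul_inv_eq_one.mp h
theorem sq4 : g 4 * g 4 = g 1 := by
  have h := rel_eq (r := F 4 * F 4 * (F 1)⁻¹) (by right; simp)
  exact mul_inv_eq_one.mp h
theorem sq5 : g 5 * g 5 = g 2 := by
  have h := rel_eq (r := F 5 * F 5 * (F 2)⁻¹) (by right; simp)
  exact mul_inv_eq_one.mp h
theorem k31 : g 3 * g 1 * (g 3)⁻¹ = (g 1)⁻¹ := by
  have h := rel_eq (r := F 3 * F 1 * (F 3)⁻¹ * F 1) (by right; simp)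
  exact mul_eq_one_iff_eq_inv.mp h
theorem k32 : g 3 * g 2 * (g 3)⁻¹ = (g 2)⁻¹ := by
  have h := rel_eq (r := F 3 * F 2 * (F 3)⁻¹ * F 2) (by right; simp)
  exact mul_eq_one_iff_eq_inv.mp h
theorem k40 : g 4 * g 0 * (g 4)⁻¹ = (g 0)⁻¹ := by
  have h := rel_eq (r := F 4 * F 0 * (F 4)⁻¹ * F 0) (by right; simp)
  exact mul_eq_one_iff_eq_inv.mp h
theorem k42 : g 4 * g 2 * (g 4)⁻¹ = (g 2)⁻¹ := by
  have h := rel_eq (r := F 4 * F 2 * (F 4)⁻¹ * F 2) (by right; simp)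
  exact mul_eq_one_iff_eq_inv.mp h
theorem k50 : g 5 * g 0 * (g 5)⁻¹ = (g 0)⁻¹ := by
  have h := rel_eq (r := F 5 * F 0 * (F 5)⁻¹ * F 0) (by right; simp)
  exact mul_eq_one_iff_eq_inv.mp h
theorem k51 : g 5 * g 1 * (g 5)⁻¹ = (g 1)⁻¹ := by
  have h := rel_eq (r := F 5 * F 1 * (F 5)⁻¹ * F 1) (by right; simp)
  exact mul_eq_one_iff_eq_inv.mp h
theorem g5_eq : g 5 = g 0 * g 4 * g 3 := by
  have h := rel_eq (r := F 5 * (F 3)⁻¹ * (F 4)⁻¹ * (F 0)⁻¹) (by right; simp)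
  have h' : g 5 * (g 3)⁻¹ * (g 4)⁻¹ * (g 0)⁻¹ = 1 := h
  rwa [mul_inv_eq_one, mul_inv_eq_iff_eq_mul, mul_inv_eq_iff_eq_mul] at h'

theorem m0 : g 0 ∈ Λ := Subgroup.subset_closure (by simp)
theorem m1 : g 1 ∈ Λ := Subgroup.subset_closure (by simp)
theorem m2 : g 2 ∈ Λ := Subgroup.subset_closure (by simp)

theorem conj_mem {x : P} (h0 : x * g 0 * x⁻¹ ∈ Λ) (h1 : x * g 1 * x⁻¹ ∈ Λ)
    (h2 : x * g 2 * x⁻¹ ∈ Λ) : ∀ h ∈ Λ, x * h * x⁻¹ ∈ Λ := by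
  have : Λ ≤ Λ.comap (MulAut.conj x).toMonoidHom := by
    refine (Subgroup.closure_le _).2 ?_
    rintro y (rfl | rfl | rfl)
    · exact h0
    · exact h1
    · exact h2
  exact fun h hh => this hh

theorem conj_gen (i : Fin 6) : ∀ h ∈ Λ, g i * h * (g i)⁻¹ ∈ Λ := by
  have s0 := Λ.inv_mem m0
  have s1 := Λ.inv_mem m1
  have s2 := Λ.inv_mem m2
  have key : ∀ x ∈ Λ, ∀ h ∈ Λ, x * h * x⁻¹ ∈ Λ := fun x hx h hh =>
    Λ.mul_mem (Λ.mul_mem hx hh) (Λ.inv_mem hx)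
  fin_cases i
  · exact key _ m0
  · exact key _ m1
  · exact key _ m2
  · refine conj_mem (x := g 3) ?_ (k31 ▸ s1) (k32 ▸ s2)
    have : g 3 * g 0 * (g 3)⁻¹ = g 0 := by rw [← sq3]; group
    rw [this]; exact m0
  · refine conj_mem (x := g 4) (k40 ▸ s0) ?_ (k42 ▸ s2)
    have : g 4 * g 1 * (g 4)⁻¹ = g 1 := by rw [← sq4]; group
    rw [this]; exact m1
  · refine conj_mem (x := g 5) (k50 ▸ s0) (k51 ▸ s1) ?_
    have : g 5 * g 2 * (g 5)⁻¹ = g 2 := by rw [← sq5]; group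
    rw [this]; exact m2

theorem sq_mem (i : Fin 6) : g i * g i ∈ Λ := by
  fin_cases i
  · exact Λ.mul_mem m0 m0
  · exact Λ.mul_mem m1 m1
  · exact Λ.mul_mem m2 m2
  · exact sq3 ▸ m0
  · exact sq4 ▸ m1
  · exact sq5 ▸ m2

theorem normal_Λ : Λ.Normal := by
  refine ⟨fun h hh x => ?_⟩
  obtain ⟨w, rfl⟩ := PresentedGroup.mk_surjective rels x
  induction w using FreeGroup.induction_on generalizing h with
  | C1 => simpa using hh
  | of i => exact conj_gen i h hh
  | inv_of i _ =>
    have h1 := conj_gen i _ (Λ.mul_mem (Λ.mul_mem (Λ.inv_mem (sq_mem i)) hh) (sq_mem i))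
    change (g i)⁻¹ * h * (g i)⁻¹⁻¹ ∈ Λ
    convert h1 using 1
    group
  | mul x y hx hy =>
    have := hx _ (hy _ hh)
    simpa [mul_assoc] using this

/-- The map to the Klein four group on generators. -/
def kGen : Fin 6 → Multiplicative (ZMod 2 × ZMod 2) :=
  ![1, 1, 1, Multiplicative.ofAdd (1, 0), Multiplicative.ofAdd (0, 1), Multiplicative.ofAdd (1, 1)]

theorem lift_rels {G : Type} [Group G] (f : Fin 6 → G)
    (h01 : f 0 * f 1 = f 1 * f 0) (h02 : f 0 * f 2 = f 2 * f 0) (h12 : f 1 * f 2 = f 2 * f 1)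
    (h3 : f 3 * f 3 = f 0) (h4 : f 4 * f 4 = f 1) (h5 : f 5 * f 5 = f 2)
    (h31 : f 3 * f 1 = (f 1)⁻¹ * f 3) (h32 : f 3 * f 2 = (f 2)⁻¹ * f 3)
    (h40 : f 4 * f 0 = (f 0)⁻¹ * f 4) (h42 : f 4 * f 2 = (f 2)⁻¹ * f 4)
    (h50 : f 5 * f 0 = (f 0)⁻¹ * f 5) (h51 : f 5 * f 1 = (f 1)⁻¹ * f 5)
    (h : f 5 = f 0 * f 4 * f 3) : ∀ r ∈ rels, FreeGroup.lift f r = 1 := by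
  have sw : ∀ a b : G, a * b = b * a → a * b * a⁻¹ * b⁻¹ = 1 := by
    intro a b hab
    rw [hab]; group
  have cj : ∀ a b : G, a * b = b⁻¹ * a → a * b * a⁻¹ * b = 1 := by
    intro a b hab
    rw [hab]; group
  rintro r (⟨i, j, rfl⟩ | hr)
  · simp only [map_mul, map_inv, FreeGroup.lift_apply_of]
    apply sw
    fin_cases i <;> fin_cases j <;>
      first | rfl | exact h01 | exact h02 | exact h12 | exact h01.symm | exact h02.symm | exact h12.symm
  · rcases hr with rfl | rfl | rfl | rfl | rfl | rfl | rfl | rfl | rfl | rfl <;>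
      simp only [map_mul, map_inv, FreeGroup.lift_apply_of]
    · rw [h3, mul_inv_cancel]
    · rw [h4, mul_inv_cancel]
    · rw [h5, mul_inv_cancel]
    · exact cj _ _ h31
    · exact cj _ _ h32
    · exact cj _ _ h40
    · exact cj _ _ h42
    · exact cj _ _ h50
    · exact cj _ _ h51
    · rw [h]; group

/-- The holonomy homomorphism. -/
def φ : P →* Multiplicative (ZMod 2 × ZMod 2) :=
  PresentedGroup.toGroup (f := kGen) (by apply lift_rels <;> decide)

theorem φ_g (i : Fin 6) : φ (g i) = kGen i := PresentedGroup.toGroup.of _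

/-- A glide rotation of `ℤ³`. -/
def rot (s t u : ℤˣ) (a b c : ℤ) : Equiv.Perm (ℤ × ℤ × ℤ) where
  toFun p := (s * p.1 + a, t * p.2.1 + b, u * p.2.2 + c)
  invFun p := (s * (p.1 - a), t * (p.2.1 - b), u * (p.2.2 - c))
  left_inv p := by
    have h : ∀ (v : ℤˣ) (x : ℤ), (v : ℤ) * (v * x) = x := fun v x => by
      rw [← mul_assoc, ← Units.val_mul, Int.units_mul_self]; simp
    simp [h]
  right_inv p := by
    have h : ∀ (v : ℤˣ) (x : ℤ), (v : ℤ) * (v * x) = x := fun v x => by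
      rw [← mul_assoc, ← Units.val_mul, Int.units_mul_self]; simp
    simp [h]

/-- The affine action on generators. -/
def rGen : Fin 6 → Equiv.Perm (ℤ × ℤ × ℤ) :=
  ![rot 1 1 1 2 0 0, rot 1 1 1 0 2 0, rot 1 1 1 0 0 2,
    rot 1 (-1) (-1) 1 0 0, rot (-1) 1 (-1) 0 1 1, rot (-1) (-1) 1 1 1 1]

/-- The affine action of `P` on `ℤ³`. -/
def ρ : P →* Equiv.Perm (ℤ × ℤ × ℤ) :=
  PresentedGroup.toGroup (f := rGen) (by
    apply lift_rels <;> (try rw [eq_inv_mul_iff_mul_eq]) <;> ext p <;>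
      simp [rGen, rot] <;> ring)

theorem ρ_g (i : Fin 6) : ρ (g i) = rGen i := PresentedGroup.toGroup.of _

theorem tr_pow (a b c n : ℤ) (p : ℤ × ℤ × ℤ) :
    (rot 1 1 1 a b c ^ n) p = (p.1 + n * a, p.2.1 + n * b, p.2.2 + n * c) := by
  induction n using Int.induction_on generalizing p with
  | zero => simp
  | succ n ih =>
    rw [zpow_add_one, Equiv.Perm.mul_apply, ih]
    simp [rot]
    refine ⟨?_, ?_, ?_⟩ <;> ring
  | pred n ih =>
    rw [zpow_sub_one, Equiv.Perm.mul_apply, ih]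
    simp [rot, Equiv.Perm.inv_def, Equiv.symm]
    refine ⟨?_, ?_, ?_⟩ <;> ring

/-- The parametrisation of the lattice. -/
def latHom : Multiplicative (ℤ × ℤ × ℤ) →* P :=
  MonoidHom.mk' (fun v => g 0 ^ v.toAdd.1 * g 1 ^ v.toAdd.2.1 * g 2 ^ v.toAdd.2.2) (by
    intro v w
    have h01 : Commute (g 1) (g 0) := c01.symm
    have h02 : Commute (g 2) (g 0) := c02.symm
    have h12 : Commute (g 2) (g 1) := c12.symm
    simp only [toAdd_mul, Prod.fst_add, Prod.snd_add, zpow_add]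
    generalize v.toAdd.1 = a, v.toAdd.2.1 = b, v.toAdd.2.2 = c
    generalize w.toAdd.1 = a', w.toAdd.2.1 = b', w.toAdd.2.2 = c'
    have e1 := (h01.zpow_zpow b a').eq
    have e2 := (h02.zpow_zpow c a').eq
    have e3 := (h12.zpow_zpow c b').eq
    calc _ = g 0 ^ a * (g 0 ^ a' * g 1 ^ b) * g 1 ^ b' * g 2 ^ c * g 2 ^ c' := by
            simp only [mul_assoc]
      _ = g 0 ^ a * g 1 ^ b * g 0 ^ a' * (g 1 ^ b' * g 2 ^ c) * g 2 ^ c' := by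
            rw [← e1]; simp only [mul_assoc]
      _ = g 0 ^ a * g 1 ^ b * (g 0 ^ a' * g 2 ^ c) * g 1 ^ b' * g 2 ^ c' := by
            rw [← e3]; simp only [mul_assoc]
      _ = _ := by rw [← e2]; simp only [mul_assoc])

theorem latHom_apply (v : Multiplicative (ℤ × ℤ × ℤ)) :
    latHom v = g 0 ^ v.toAdd.1 * g 1 ^ v.toAdd.2.1 * g 2 ^ v.toAdd.2.2 := rfl

theorem latHom_inj : Function.Injective latHom := by
  rw [injective_iff_map_eq_one]
  intro v hv
  have h := congrArg (fun x => ρ x (0, 0, 0)) hv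
  simp only [latHom_apply, map_mul, map_zpow, ρ_g, map_one, Equiv.Perm.mul_apply,
    Equiv.Perm.one_apply] at h
  simp [rGen, tr_pow] at h
  apply Multiplicative.toAdd.injective
  exact Prod.ext h.1 (Prod.ext h.2.1 h.2.2)

theorem latHom_range : latHom.range = Λ := by
  apply le_antisymm
  · rintro _ ⟨v, rfl⟩
    exact Λ.mul_mem (Λ.mul_mem (Λ.zpow_mem m0 _) (Λ.zpow_mem m1 _)) (Λ.zpow_mem m2 _)
  · refine (Subgroup.closure_le _).2 ?_
    rintro y (rfl | rfl | rfl)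
    · exact ⟨Multiplicative.ofAdd (1, 0, 0), by simp [latHom_apply]⟩
    · exact ⟨Multiplicative.ofAdd (0, 1, 0), by simp [latHom_apply]⟩
    · exact ⟨Multiplicative.ofAdd (0, 0, 1), by simp [latHom_apply]⟩

theorem ker_φ : φ.ker = Λ := by
  haveI := normal_Λ
  apply le_antisymm
  · let q := QuotientGroup.mk' Λ
    have qe : ∀ x ∈ Λ, q x = 1 := fun x hx => (QuotientGroup.eq_one_iff x).2 hx
    have a2 : q (g 3) * q (g 3) = 1 := by rw [← map_mul, sq3]; exact qe _ m0
    have b2 : q (g 4) * q (g 4) = 1 := by rw [← map_mul, sq4]; exact qe _ m1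
    have c : q (g 5) = q (g 4) * q (g 3) := by rw [g5_eq, map_mul, map_mul, qe _ m0, one_mul]
    have c2 : q (g 5) * q (g 5) = 1 := by rw [← map_mul, sq5]; exact qe _ m2
    have ab : q (g 4) * q (g 3) = q (g 3) * q (g 4) := by
      rw [c] at c2
      rw [eq_inv_of_mul_eq_one_left c2, mul_inv_rev, ← eq_inv_of_mul_eq_one_left a2,
        ← eq_inv_of_mul_eq_one_left b2]
    generalize hA : q (g 3) = A at *
    generalize hB : q (g 4) = B at *
    have A2 : ∀ x, A * (A * x) = x := fun x => by rw [← mul_assoc, a2, one_mul]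
    have B2 : ∀ x, B * (B * x) = x := fun x => by rw [← mul_assoc, b2, one_mul]
    have BA : ∀ x, B * (A * x) = A * (B * x) := fun x => by rw [← mul_assoc, ab, mul_assoc]
    let ψ : Multiplicative (ZMod 2 × ZMod 2) →* P ⧸ Λ :=
      MonoidHom.mk' (fun v => A ^ v.toAdd.1.val * B ^ v.toAdd.2.val) (by
        rintro ⟨x, y⟩ ⟨z, w⟩
        change A ^ (x + z).val * B ^ (y + w).val = A ^ x.val * B ^ y.val * (A ^ z.val * B ^ w.val)
        have hz : (0 : ZMod 2).val = 0 := rfl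
        have ho : (1 : ZMod 2).val = 1 := rfl
        have ht : (1 : ZMod 2) + 1 = 0 := rfl
        have cs : ∀ x : ZMod 2, x = 0 ∨ x = 1 := by decide
        rcases cs x with rfl | rfl <;> rcases cs y with rfl | rfl <;>
          rcases cs z with rfl | rfl <;> rcases cs w with rfl | rfl <;>
          simp [hz, ho, ht, mul_assoc, a2, b2, ab, A2, B2, BA])
    have ho : (1 : ZMod 2).val = 1 := rfl
    have hc : ψ.comp φ = q := by
      apply PresentedGroup.ext
      intro i
      change ψ (φ (g i)) = q (g i)
      rw [φ_g]
      fin_cases i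
      · exact (map_one ψ).trans (qe _ m0).symm
      · exact (map_one ψ).trans (qe _ m1).symm
      · exact (map_one ψ).trans (qe _ m2).symm
      · refine Eq.trans ?_ hA.symm
        simp [ψ, kGen, ho]
      · refine Eq.trans ?_ hB.symm
        simp [ψ, kGen, ho]
      · refine Eq.trans ?_ c.symm
        simp [ψ, kGen, ho, ab]
    intro x hx
    have : q x = 1 := by
      rw [← hc, MonoidHom.comp_apply, MonoidHom.mem_ker.1 hx, map_one]
    exact (QuotientGroup.eq_one_iff x).1 this
  · refine (Subgroup.closure_le _).2 ?_
    rintro y (rfl | rfl | rfl) <;> exact φ_g _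

/-- `Λ` is normal in `P`, `Λ` is free abelian of rank 3 with basis
`{g₁, g₂, g₃}`, and there is a surjection `P → ℤ/2 × ℤ/2` with kernel `Λ` sending
`g_{β₁}` and `g_{β₂}` to the two generators; i.e. `P/Λ ≅ ℤ/2 × ℤ/2`, generated by the
images of `g_{β₁}` and `g_{β₂}`. -/
theorem lattice_normal_free_abelian_quotient_Z2Z2 :
    Λ.Normal ∧
    (∃ e : Multiplicative (ℤ × ℤ × ℤ) ≃* Λ,
      ((e (Multiplicative.ofAdd (1, 0, 0)) : Λ) : P) = g 0 ∧
      ((e (Multiplicative.ofAdd (0, 1, 0)) : Λ) : P) = g 1 ∧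
      ((e (Multiplicative.ofAdd (0, 0, 1)) : Λ) : P) = g 2) ∧
    (∃ φ : P →* Multiplicative (ZMod 2 × ZMod 2),
      Function.Surjective φ ∧ φ.ker = Λ ∧
      φ (g 3) = Multiplicative.ofAdd (1, 0) ∧ φ (g 4) = Multiplicative.ofAdd (0, 1)) := by
  refine ⟨normal_Λ, ?_, φ, ?_, ker_φ, φ_g 3, φ_g 4⟩
  · refine ⟨(MonoidHom.ofInjective latHom_inj).trans (MulEquiv.subgroupCongr latHom_range),
      ?_, ?_, ?_⟩
    · change latHom _ = _
      simp [latHom_apply]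
    · change latHom _ = _
      simp [latHom_apply]
    · change latHom _ = _
      simp [latHom_apply]
  · have h : ∀ v : Multiplicative (ZMod 2 × ZMod 2), v = kGen 0 ∨ v = kGen 3 ∨ v = kGen 4 ∨
        v = kGen 5 := by decide
    intro v
    rcases h v with rfl | rfl | rfl | rfl <;> exact ⟨_, φ_g _⟩

end FlatZ2Z2
end

section
/- Let P be the group with presentation ⟨g₁, g₂, g₃, g_{β₁}, g_{β₂}, g_{β₃} | g_i g_j = g_j g_i for i, j ∈ {1,2,3}, g_{β_i}² = g_i for i ∈ {1,2,3}, g_{β_i} g_j g_{β_i}⁻¹ = g_j⁻¹ for i ≠ j in {1,2,3}, g_{β₃} = g₁ g_{β₂} g_{β₁}⟩. Then P is torsion-free: every element of P of finite order is the identity. -/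
namespace TorsionFreeZ2Z2

/-- Generators: `0, 1, 2` are `g₁, g₂, g₃`, and `3, 4, 5` are `g_{β₁}, g_{β₂}, g_{β₃}`. -/
abbrev F (i : Fin 6) : FreeGroup (Fin 6) := FreeGroup.of i

/-- The embedding of the indices of `g₁, g₂, g₃` into the generator indices. -/
abbrev ι (i : Fin 3) : Fin 6 := i.castLE (by norm_num)

/-- Relations of `π₁(T³/(ℤ₂ × ℤ₂))` (the Hantzsche–Wendt manifold): the `gᵢ` commute,
`g_{βᵢ}² = gᵢ` for `i ∈ {1,2,3}`, `g_{βᵢ} g_j g_{βᵢ}⁻¹ = g_j⁻¹` for `i ≠ j`, and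
`g_{β₃} = g₁ g_{β₂} g_{β₁}`. -/
def rels : Set (FreeGroup (Fin 6)) :=
  {r | ∃ i j : Fin 3, r = F (ι i) * F (ι j) * (F (ι i))⁻¹ * (F (ι j))⁻¹} ∪
  {F 3 * F 3 * (F 0)⁻¹,
   F 4 * F 4 * (F 1)⁻¹,
   F 5 * F 5 * (F 2)⁻¹,
   F 3 * F 1 * (F 3)⁻¹ * F 1,
   F 3 * F 2 * (F 3)⁻¹ * F 2,
   F 4 * F 0 * (F 4)⁻¹ * F 0,
   F 4 * F 2 * (F 4)⁻¹ * F 2,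
   F 5 * F 0 * (F 5)⁻¹ * F 0,
   F 5 * F 1 * (F 5)⁻¹ * F 1,
   F 5 * (F 3)⁻¹ * (F 4)⁻¹ * (F 0)⁻¹}

/-- The fundamental group `P = π₁(T³/(ℤ₂ × ℤ₂))` given by the above presentation. -/
abbrev P := PresentedGroup rels

section NormalForm

variable {G : Type*} [Group G]

/-- Elements of the form `a₁^i a₂^j a₃^k c` with `c ∈ {1, b₁, b₂, b₃}`. -/
def NF (a : Fin 3 → G) (b : Fin 3 → G) (x : G) : Prop :=
  ∃ (i j k : ℤ) (c : G), (c = 1 ∨ c = b 0 ∨ c = b 1 ∨ c = b 2) ∧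
    x = a 0 ^ i * a 1 ^ j * a 2 ^ k * c

variable {a b : Fin 3 → G}

theorem nf_a0 (n : ℤ) {x : G} (hx : NF a b x) : NF a b (a 0 ^ n * x) := by
  obtain ⟨i, j, k, c, hc, rfl⟩ := hx
  exact ⟨n + i, j, k, c, hc, by simp only [zpow_add, mul_assoc]⟩

theorem nf_a1 (hcomm : ∀ i j, Commute (a i) (a j)) (n : ℤ) {x : G} (hx : NF a b x) :
    NF a b (a 1 ^ n * x) := by
  obtain ⟨i, j, k, c, hc, rfl⟩ := hx
  refine ⟨i, n + j, k, c, hc, ?_⟩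
  have h : a 1 ^ n * a 0 ^ i = a 0 ^ i * a 1 ^ n := ((hcomm 1 0).zpow_zpow n i).eq
  simp only [zpow_add, ← mul_assoc, h]

theorem nf_a2 (hcomm : ∀ i j, Commute (a i) (a j)) (n : ℤ) {x : G} (hx : NF a b x) :
    NF a b (a 2 ^ n * x) := by
  obtain ⟨i, j, k, c, hc, rfl⟩ := hx
  refine ⟨i, j, n + k, c, hc, ?_⟩
  have h : a 2 ^ n * (a 0 ^ i * a 1 ^ j) = a 0 ^ i * a 1 ^ j * a 2 ^ n :=
    (((hcomm 2 0).zpow_zpow n i).mul_right ((hcomm 2 1).zpow_zpow n j)).eq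
  simp only [zpow_add, ← mul_assoc] at h ⊢
  rw [h]

theorem nf_a (hcomm : ∀ i j, Commute (a i) (a j)) (l : Fin 3) (n : ℤ) {x : G}
    (hx : NF a b x) : NF a b (a l ^ n * x) := by
  fin_cases l
  · exact nf_a0 n hx
  · exact nf_a1 hcomm n hx
  · exact nf_a2 hcomm n hx

theorem nf_c {c : G} (hc : c = 1 ∨ c = b 0 ∨ c = b 1 ∨ c = b 2) : NF a b c :=
  ⟨0, 0, 0, c, hc, by simp⟩

/-- If `y` normalizes the translations, it is enough to check products `y c`. -/
theorem nf_step (hcomm : ∀ i j, Commute (a i) (a j)) {y : G}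
    (hy : ∀ l, SemiconjBy y (a l) (a l) ∨ SemiconjBy y (a l) (a l)⁻¹)
    (h : ∀ c, (c = 1 ∨ c = b 0 ∨ c = b 1 ∨ c = b 2) → NF a b (y * c))
    {x : G} (hx : NF a b x) : NF a b (y * x) := by
  obtain ⟨i, j, k, c, hc, rfl⟩ := hx
  have key : ∀ l (n : ℤ), ∃ m : ℤ, y * a l ^ n = a l ^ m * y := by
    intro l n
    rcases hy l with h1 | h1
    · exact ⟨n, (h1.zpow_right n).eq⟩
    · refine ⟨-n, ?_⟩
      have := (h1.zpow_right n).eq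
      rwa [inv_zpow'] at this
  obtain ⟨i', hi⟩ := key 0 i
  obtain ⟨j', hj⟩ := key 1 j
  obtain ⟨k', hk⟩ := key 2 k
  have e : y * (a 0 ^ i * a 1 ^ j * a 2 ^ k * c) = a 0 ^ i' * (a 1 ^ j' * (a 2 ^ k' * (y * c))) := by
    calc _ = (y * a 0 ^ i) * a 1 ^ j * a 2 ^ k * c := by simp only [mul_assoc]
      _ = a 0 ^ i' * (y * a 1 ^ j) * a 2 ^ k * c := by rw [hi]; simp only [mul_assoc]
      _ = a 0 ^ i' * a 1 ^ j' * (y * a 2 ^ k) * c := by rw [hj]; simp only [mul_assoc]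
      _ = _ := by rw [hk]; simp only [mul_assoc]
  rw [e]
  exact nf_a hcomm _ _ (nf_a hcomm _ _ (nf_a hcomm _ _ (h c hc)))

theorem nf_b (hcomm : ∀ i j, Commute (a i) (a j)) (hsq : ∀ i, b i * b i = a i)
    (hconj : ∀ i j, i ≠ j → SemiconjBy (b i) (a j) (a j)⁻¹)
    (h3 : b 2 = a 0 * b 1 * b 0) (l : Fin 3) {x : G} (hx : NF a b x) : NF a b (b l * x) := by
  have hself : ∀ i, SemiconjBy (b i) (a i) (a i) := fun i => by
    rw [← hsq i, SemiconjBy, mul_assoc]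
  have hy : ∀ i l, SemiconjBy (b i) (a l) (a l) ∨ SemiconjBy (b i) (a l) (a l)⁻¹ := by
    intro i l
    by_cases e : i = l
    · subst e; exact Or.inl (hself i)
    · exact Or.inr (hconj i l e)
  have hA : ∀ l {x : G}, NF a b x → NF a b (a l * x) := fun l x hx => by
    simpa using nf_a hcomm l 1 hx
  have hA' : ∀ l {x : G}, NF a b x → NF a b ((a l)⁻¹ * x) := fun l x hx => by
    simpa using nf_a hcomm l (-1) hx
  have N0 : NF a b (b 0) := nf_c (by simp)
  have N1 : NF a b (b 1) := nf_c (by simp)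
  have N2 : NF a b (b 2) := nf_c (by simp)
  have None : NF a b (1 : G) := nf_c (by simp)
  -- products
  have e10 : b 1 * b 0 = (a 0)⁻¹ * b 2 := by rw [h3]; group
  have e12 : b 1 * b 2 = (a 0)⁻¹ * (a 1 * b 0) := by
    have := (hconj 1 0 (by decide)).eq
    rw [h3, ← hsq 1]
    calc _ = (b 1 * a 0) * b 1 * b 0 := by simp only [mul_assoc]
      _ = _ := by rw [this]; simp only [mul_assoc]
  have e01 : b 0 * b 1 = (a 1)⁻¹ * ((a 2)⁻¹ * b 2) := by
    have inv : ∀ i, (a i)⁻¹ * b i = (b i)⁻¹ := fun i => by rw [← hsq i]; group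
    have h01 := (hconj 0 1 (by decide)).eq
    have h10 := (hconj 1 0 (by decide)).eq
    rw [inv 2, h3, mul_inv_rev, mul_inv_rev, ← inv 0, ← inv 1]
    have q1 : b 0 * (a 1)⁻¹ = a 1 * b 0 := by
      have := (hconj 0 1 (by decide)).inv_right.eq
      simpa using this
    have q2 : b 1 * (a 0)⁻¹ = a 0 * b 1 := by
      have := (hconj 1 0 (by decide)).inv_right.eq
      simpa using this
    have q3 : b 0 * a 0 = a 0 * b 0 := (hself 0).eq
    have q4 : (a 0)⁻¹ * a 1 = a 1 * (a 0)⁻¹ := ((hcomm 0 1).inv_left).eq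
    symm
    calc _ = (a 1)⁻¹ * ((a 0)⁻¹ * (b 0 * (a 1)⁻¹) * (b 1 * (a 0)⁻¹)) := by
            simp only [mul_assoc]
      _ = (a 1)⁻¹ * (((a 0)⁻¹ * a 1) * (b 0 * a 0) * b 1) := by
            rw [q1, q2]; simp only [mul_assoc]
      _ = _ := by rw [q3, q4]; group
  have e02 : b 0 * b 2 = a 2 ^ (-1 : ℤ) * (a 1 ^ (-1 : ℤ) * (a 0 * b 1)) := by
    have q : b 2 = a 2 * (a 1 * (b 0 * b 1)) := by rw [e01]; group
    have r1 := (hconj 0 1 (by decide)).eq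
    have r2 := (hconj 0 2 (by decide)).eq
    rw [q, ← hsq 0]
    calc _ = (b 0 * a 2) * a 1 * (b 0 * b 1) := by simp only [mul_assoc]
      _ = (a 2)⁻¹ * (b 0 * a 1) * (b 0 * b 1) := by rw [r2]; simp only [mul_assoc]
      _ = _ := by rw [r1]; simp only [mul_assoc, zpow_neg_one]
  have s0 : ∀ {x : G}, NF a b x → NF a b (b 0 * x) := by
    intro x hx
    refine nf_step hcomm (hy 0) ?_ hx
    rintro c (rfl | rfl | rfl | rfl)
    · simpa using N0
    · rw [hsq]; simpa using hA 0 None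
    · rw [e01]; exact hA' _ (hA' _ N2)
    · rw [e02]; exact nf_a hcomm _ _ (nf_a hcomm _ _ (hA _ N1))
  have s1 : ∀ {x : G}, NF a b x → NF a b (b 1 * x) := by
    intro x hx
    refine nf_step hcomm (hy 1) ?_ hx
    rintro c (rfl | rfl | rfl | rfl)
    · simpa using N1
    · rw [e10]; exact hA' _ N2
    · rw [hsq]; simpa using hA 1 None
    · rw [e12]; exact hA' _ (hA _ N0)
  fin_cases l
  · exact s0 hx
  · exact s1 hx
  · change NF a b (b 2 * x)
    rw [h3, mul_assoc, mul_assoc]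
    exact hA 0 (s1 (s0 hx))

end NormalForm

/-- Generators of `P`. -/
def g (i : Fin 6) : P := PresentedGroup.of i

theorem rel_one {r : FreeGroup (Fin 6)} (hr : r ∈ rels) : FreeGroup.lift g r = 1 := by
  have h := PresentedGroup.one_of_mem hr
  have e : FreeGroup.lift g = PresentedGroup.mk rels := by
    ext i; simp [g, PresentedGroup.of]
  rw [e]; exact h

/-- The translations. -/
def ga : Fin 3 → P := ![g 0, g 1, g 2]
/-- The screw motions. -/
def gb : Fin 3 → P := ![g 3, g 4, g 5]

theorem ga_comm (i j : Fin 3) : Commute (ga i) (ga j) := by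
  have e : ∀ i, ga i = g (ι i) := by intro i; fin_cases i <;> rfl
  have h := rel_one (r := F (ι i) * F (ι j) * (F (ι i))⁻¹ * (F (ι j))⁻¹) (Or.inl ⟨i, j, rfl⟩)
  simp only [map_mul, map_inv, FreeGroup.lift_apply_of] at h
  rw [e, e]
  rw [mul_inv_eq_one, mul_inv_eq_iff_eq_mul] at h
  exact h

theorem gb_sq (i : Fin 3) : gb i * gb i = ga i := by
  have h1 := rel_one (r := F 3 * F 3 * (F 0)⁻¹) (by simp [rels])
  have h2 := rel_one (r := F 4 * F 4 * (F 1)⁻¹) (by simp [rels])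
  have h3 := rel_one (r := F 5 * F 5 * (F 2)⁻¹) (by simp [rels])
  simp only [map_mul, map_inv, FreeGroup.lift_apply_of, mul_inv_eq_one] at h1 h2 h3
  fin_cases i
  · exact h1
  · exact h2
  · exact h3

theorem semiconj_of {G : Type*} [Group G] {x y : G} (h : x * y * x⁻¹ * y = 1) :
    SemiconjBy x y y⁻¹ := by
  rw [mul_eq_one_iff_eq_inv, mul_inv_eq_iff_eq_mul] at h
  exact h

theorem gb_conj (i j : Fin 3) (hij : i ≠ j) : SemiconjBy (gb i) (ga j) (ga j)⁻¹ := by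
  have h1 := rel_one (r := F 3 * F 1 * (F 3)⁻¹ * F 1) (by simp [rels])
  have h2 := rel_one (r := F 3 * F 2 * (F 3)⁻¹ * F 2) (by simp [rels])
  have h3 := rel_one (r := F 4 * F 0 * (F 4)⁻¹ * F 0) (by simp [rels])
  have h4 := rel_one (r := F 4 * F 2 * (F 4)⁻¹ * F 2) (by simp [rels])
  have h5 := rel_one (r := F 5 * F 0 * (F 5)⁻¹ * F 0) (by simp [rels])
  have h6 := rel_one (r := F 5 * F 1 * (F 5)⁻¹ * F 1) (by simp [rels])
  simp only [map_mul, map_inv, FreeGroup.lift_apply_of] at h1 h2 h3 h4 h5 h6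
  fin_cases i <;> fin_cases j
  · exact absurd rfl hij
  · exact semiconj_of h1
  · exact semiconj_of h2
  · exact semiconj_of h3
  · exact absurd rfl hij
  · exact semiconj_of h4
  · exact semiconj_of h5
  · exact semiconj_of h6
  · exact absurd rfl hij

theorem gb_three : gb 2 = ga 0 * gb 1 * gb 0 := by
  have h := rel_one (r := F 5 * (F 3)⁻¹ * (F 4)⁻¹ * (F 0)⁻¹) (by simp [rels])
  simp only [map_mul, map_inv, FreeGroup.lift_apply_of] at h
  rw [mul_inv_eq_one, mul_inv_eq_iff_eq_mul, mul_inv_eq_iff_eq_mul] at h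
  exact h

theorem all_nf (x : P) : NF ga gb x := by
  have hA : ∀ l {x : P}, NF ga gb x → NF ga gb (ga l * x) := fun l x hx => by
    simpa using nf_a ga_comm l 1 hx
  have hA' : ∀ l {x : P}, NF ga gb x → NF ga gb ((ga l)⁻¹ * x) := fun l x hx => by
    simpa using nf_a ga_comm l (-1) hx
  have hB : ∀ l {x : P}, NF ga gb x → NF ga gb (gb l * x) := fun l x hx =>
    nf_b ga_comm gb_sq gb_conj gb_three l hx
  have hB' : ∀ l {x : P}, NF ga gb x → NF ga gb ((gb l)⁻¹ * x) := fun l x hx => by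
    have e : (gb l)⁻¹ = (ga l)⁻¹ * gb l := by rw [← gb_sq l]; group
    rw [e, mul_assoc]
    exact hA' l (hB l hx)
  have key : ∀ w : FreeGroup (Fin 6), ∀ x : P, NF ga gb x →
      NF ga gb (PresentedGroup.mk rels w * x) := by
    intro w
    induction w using FreeGroup.induction_on with
    | C1 => intro x hx; simpa using hx
    | of i =>
      intro x hx
      fin_cases i
      · exact hA 0 hx
      · exact hA 1 hx
      · exact hA 2 hx
      · exact hB 0 hx
      · exact hB 1 hx
      · exact hB 2 hx
    | inv_of i _ =>
      intro x hx
      rw [map_inv]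
      fin_cases i
      · exact hA' 0 hx
      · exact hA' 1 hx
      · exact hA' 2 hx
      · exact hB' 0 hx
      · exact hB' 1 hx
      · exact hB' 2 hx
    | mul u v hu hv =>
      intro x hx
      rw [map_mul, mul_assoc]
      exact hu _ (hv _ hx)
  induction x using PresentedGroup.induction_on with
  | _ w => simpa using key w 1 (nf_c (by simp))

/-- An isometry of `ℤ³` acting coordinatewise by signs and shifts. -/
def aff (s : ℤˣ × ℤˣ × ℤˣ) (t : ℤ × ℤ × ℤ) : Equiv.Perm (ℤ × ℤ × ℤ) where
  toFun p := (s.1 * p.1 + t.1, s.2.1 * p.2.1 + t.2.1, s.2.2 * p.2.2 + t.2.2)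
  invFun p := (s.1 * (p.1 - t.1), s.2.1 * (p.2.1 - t.2.1), s.2.2 * (p.2.2 - t.2.2))
  left_inv p := by simp [← mul_assoc, ← Units.val_mul]
  right_inv p := by simp [← mul_assoc, ← Units.val_mul]

theorem aff_mul (s s' : ℤˣ × ℤˣ × ℤˣ) (t t' : ℤ × ℤ × ℤ) : aff s t * aff s' t' =
    aff (s * s') (s.1 * t'.1 + t.1, s.2.1 * t'.2.1 + t.2.1, s.2.2 * t'.2.2 + t.2.2) := by
  ext p <;> simp [aff] <;> ring

theorem aff_one : aff 1 (0, 0, 0) = 1 := by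
  ext p <;> simp [aff]

theorem aff_inv (s : ℤˣ × ℤˣ × ℤˣ) (t : ℤ × ℤ × ℤ) : (aff s t)⁻¹ =
    aff s (-(s.1 * t.1), -(s.2.1 * t.2.1), -(s.2.2 * t.2.2)) := by
  ext p <;> simp [aff, Equiv.Perm.inv_def, Equiv.symm] <;> ring

/-- Images of the generators. -/
def img : Fin 6 → Equiv.Perm (ℤ × ℤ × ℤ) :=
  ![aff (1, 1, 1) (2, 0, 0), aff (1, 1, 1) (0, 2, 0), aff (1, 1, 1) (0, 0, 2),
    aff (1, -1, -1) (1, 0, 0), aff (-1, 1, -1) (0, 1, 1), aff (-1, -1, 1) (1, 1, 1)]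

theorem img_rels : ∀ r ∈ rels, FreeGroup.lift img r = 1 := by
  rintro r (⟨i, j, rfl⟩ | h)
  · rw [← aff_one]
    fin_cases i <;> fin_cases j <;>
      simp [img, ι, aff_mul, aff_inv, Fin.castLE] <;> first | rfl | exact aff_one.symm
  · rw [← aff_one]
    simp only [Set.mem_insert_iff, Set.mem_singleton_iff] at h
    rcases h with rfl | rfl | rfl | rfl | rfl | rfl | rfl | rfl | rfl | rfl <;>
      simp [img, aff_mul, aff_inv] <;> rfl

/-- The representation of `P` by isometries. -/
def φ : P →* Equiv.Perm (ℤ × ℤ × ℤ) := PresentedGroup.toGroup img_rels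

theorem φ_g (i : Fin 6) : φ (g i) = img i := PresentedGroup.toGroup.of img_rels

theorem aff_zpow (t : ℤ × ℤ × ℤ) (n : ℤ) :
    aff 1 t ^ n = aff 1 (n * t.1, n * t.2.1, n * t.2.2) := by
  induction n using Int.induction_on with
  | zero => simp [aff_one]
  | succ i ih => rw [zpow_add_one, ih, aff_mul]; simp; congr 1; ext <;> simp <;> ring
  | pred i ih => rw [zpow_sub_one, ih, aff_inv, aff_mul]; simp; congr 1; ext <;> simp <;> ring

theorem shift_zero {X : Type*} (σ : Equiv.Perm X) (h : IsOfFinOrder σ) (f : X → ℤ) (k : ℤ)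
    (p : X) (hf : ∀ p, f (σ p) = f p + k) : k = 0 := by
  obtain ⟨n, hn, h1⟩ := isOfFinOrder_iff_pow_eq_one.mp h
  have key : ∀ m : ℕ, f ((σ ^ m) p) = f p + m * k := by
    intro m
    induction m with
    | zero => simp
    | succ m ih => rw [pow_succ', Equiv.Perm.mul_apply, hf, ih]; push_cast; ring
  have := key n
  rw [h1] at this
  simp at this
  omega

theorem φ_trans (i j k : ℤ) :
    φ (ga 0 ^ i * ga 1 ^ j * ga 2 ^ k) = aff 1 (2 * i, 2 * j, 2 * k) := by
  have h0 : φ (ga 0) = aff 1 (2, 0, 0) := φ_g 0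
  have h1 : φ (ga 1) = aff 1 (0, 2, 0) := φ_g 1
  have h2 : φ (ga 2) = aff 1 (0, 0, 2) := φ_g 2
  simp only [map_mul, map_zpow, h0, h1, h2, aff_zpow, aff_mul]
  congr 1
  ext <;> simp <;> ring

/-- `P = π₁(T³/(ℤ₂ × ℤ₂))` (the fundamental group of the
Hantzsche–Wendt manifold) is torsion-free: every element of finite order is the
identity. -/
theorem torsion_free_Z2Z2 : ∀ x : P, IsOfFinOrder x → x = 1 := by
  intro x hx
  obtain ⟨i, j, k, c, hc, rfl⟩ := all_nf x
  have hfin := φ.isOfFinOrder hx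
  rw [map_mul, φ_trans] at hfin
  have h3 : φ (gb 0) = aff (1, -1, -1) (1, 0, 0) := φ_g 3
  have h4 : φ (gb 1) = aff (-1, 1, -1) (0, 1, 1) := φ_g 4
  have h5 : φ (gb 2) = aff (-1, -1, 1) (1, 1, 1) := φ_g 5
  rcases hc with rfl | rfl | rfl | rfl
  · rw [map_one, mul_one] at hfin
    have e0 := shift_zero _ hfin (fun p => p.1) (2 * i) 0 (by intro p; simp [aff])
    have e1 := shift_zero _ hfin (fun p => p.2.1) (2 * j) 0 (by intro p; simp [aff])
    have e2 := shift_zero _ hfin (fun p => p.2.2) (2 * k) 0 (by intro p; simp [aff])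
    obtain rfl : i = 0 := by omega
    obtain rfl : j = 0 := by omega
    obtain rfl : k = 0 := by omega
    simp
  · rw [h3, aff_mul] at hfin
    have e := shift_zero _ hfin (fun p => p.1) (2 * i + 1) 0 (by intro p; simp [aff]; ring)
    omega
  · rw [h4, aff_mul] at hfin
    have e := shift_zero _ hfin (fun p => p.2.1) (2 * j + 1) 0 (by intro p; simp [aff]; ring)
    omega
  · rw [h5, aff_mul] at hfin
    have e := shift_zero _ hfin (fun p => p.2.2) (2 * k + 1) 0 (by intro p; simp [aff]; ring)
    omega

end TorsionFreeZ2Z2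
end
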